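/- Let n be an odd positive integer. Then the group V_{8n} has exactly 2n+3 conjugacy classes. -/

import Mathlib

/-- The relators of the presentation
`V_{8n} = ⟨a, b ∣ a^{2n} = b⁴ = 1, (ba)² = 1, (b⁻¹a)² = 1⟩`,
where `a` is the generator indexed by `0` and `b` the one indexed by `1`.
(The relations `ba = a⁻¹b⁻¹` and `b⁻¹a = a⁻¹b` are equivalent to
`(ba)² = 1` and `(b⁻¹a)² = 1` respectively.) -/
def V8nRels (n : ℕ) : Set (FreeGroup (Fin 2)) :=
  {(FreeGroup.of 0) ^ (2 * n), (FreeGroup.of 1) ^ 4,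
   (FreeGroup.of 1 * FreeGroup.of 0) ^ 2,
   ((FreeGroup.of 1)⁻¹ * FreeGroup.of 0) ^ 2}

/-- The group `V_{8n}` of order `8n`. -/
abbrev V8n (n : ℕ) : Type := PresentedGroup (V8nRels n)

/-- The generator `a` of `V_{8n}`. -/
def aV (n : ℕ) : V8n n := PresentedGroup.of 0

/-- The generator `b` of `V_{8n}`. -/
def bV (n : ℕ) : V8n n := PresentedGroup.of 1

/-- Concrete model of `V_{8n}`: `r i e = a^i z^e`, `s i e = a^i z^e b` where `z = b^2`. -/
inductive VModel (n : ℕ) : Type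
  | r : ZMod (2 * n) → ZMod 2 → VModel n
  | s : ZMod (2 * n) → ZMod 2 → VModel n

namespace VModel

/-- Reduction mod 2. -/
def c (n : ℕ) : ZMod (2 * n) →+* ZMod 2 := ZMod.castHom (Dvd.intro n rfl) (ZMod 2)

/-- Multiplication. -/
def mul {n : ℕ} : VModel n → VModel n → VModel n
  | r i e, r j f => r (i + j) (e + f)
  | r i e, s j f => s (i + j) (e + f)
  | s i e, r j f => s (i - j) (e + f + c n j)
  | s i e, s j f => r (i - j) (e + f + c n j + 1)

/-- Inverse. -/
def inv {n : ℕ} : VModel n → VModel n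
  | r i e => r (-i) e
  | s i e => s i (e + c n i + 1)

instance (n : ℕ) : Mul (VModel n) := ⟨mul⟩
instance (n : ℕ) : One (VModel n) := ⟨r 0 0⟩
instance (n : ℕ) : Inv (VModel n) := ⟨inv⟩

theorem rr {n : ℕ} (i j e f) : (r i e * r j f : VModel n) = r (i + j) (e + f) := rfl
theorem rs {n : ℕ} (i j e f) : (r i e * s j f : VModel n) = s (i + j) (e + f) := rfl
theorem sr {n : ℕ} (i j e f) : (s i e * r j f : VModel n) = s (i - j) (e + f + c n j) := rfl
theorem ss {n : ℕ} (i j e f) : (s i e * s j f : VModel n) = r (i - j) (e + f + c n j + 1) := rfl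
theorem one_eq {n : ℕ} : (1 : VModel n) = r 0 0 := rfl
theorem inv_r {n : ℕ} (i e) : (r i e : VModel n)⁻¹ = r (-i) e := rfl
theorem inv_s {n : ℕ} (i e) : (s i e : VModel n)⁻¹ = s i (e + c n i + 1) := rfl

theorem aux1 : ∀ x y z w v : ZMod 2, x + y + z + w + v = x + (y + z + w) + v := by decide

instance (n : ℕ) : Group (VModel n) :=
  Group.ofLeftAxioms
    (by
      rintro (⟨i, e⟩ | ⟨i, e⟩) (⟨j, f⟩ | ⟨j, f⟩) (⟨k, g⟩ | ⟨k, g⟩) <;>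
      simp only [rr, rs, sr, ss, map_add, map_sub, r.injEq, s.injEq] <;>
      refine ⟨by ring, ?_⟩ <;> generalize c n j = x <;> generalize c n k = y <;>
      clear i j k <;> revert e f g x y <;> decide)
    (by
      rintro (⟨i, e⟩ | ⟨i, e⟩) <;> simp [one_eq, rr, rs])
    (by
      rintro (⟨i, e⟩ | ⟨i, e⟩) <;>
      simp only [one_eq, inv_r, inv_s, rr, ss, r.injEq] <;>
      refine ⟨by ring, ?_⟩ <;> generalize c n i = x <;> clear i <;> revert e <;>
      try revert x
      all_goals decide)

/-- Underlying sum type. -/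
def equivSum (n : ℕ) :
    (ZMod (2 * n) × ZMod 2) ⊕ (ZMod (2 * n) × ZMod 2) ≃ VModel n where
  toFun := Sum.elim (fun p => r p.1 p.2) (fun p => s p.1 p.2)
  invFun
    | r i e => Sum.inl (i, e)
    | s i e => Sum.inr (i, e)
  left_inv := by rintro (⟨i, e⟩ | ⟨i, e⟩) <;> rfl
  right_inv := by rintro (⟨i, e⟩ | ⟨i, e⟩) <;> rfl

theorem key {n : ℕ} (hn : 0 < n) (hodd : Odd n) (i : ZMod (2 * n)) (h2 : 2 * i = 0)
    (hc : c n i = 0) : i = 0 := by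
  have : NeZero (2 * n) := ⟨by omega⟩
  obtain ⟨k, rfl⟩ := ZMod.natCast_zmod_surjective i
  rw [map_natCast, ZMod.natCast_eq_zero_iff] at hc
  have h2' : ((2 * k : ℕ) : ZMod (2 * n)) = 0 := by push_cast; exact h2
  rw [ZMod.natCast_eq_zero_iff] at h2' ⊢
  have : n ∣ k := Nat.dvd_of_mul_dvd_mul_left (by norm_num) h2'
  exact Nat.Coprime.mul_dvd_of_dvd_of_dvd (Nat.coprime_two_left.mpr hodd) hc this

theorem comm_rr {n : ℕ} (i j e f) : Commute (r i e : VModel n) (r j f) := by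
  simp only [Commute, SemiconjBy, rr, add_comm]

theorem comm_rs {n : ℕ} (hn : 0 < n) (hodd : Odd n) (i j e f) :
    Commute (r i e : VModel n) (s j f) ↔ i = 0 := by
  simp only [Commute, SemiconjBy, rs, sr, s.injEq]
  constructor
  · rintro ⟨h1, h2⟩
    apply key hn hodd
    · linear_combination h1
    · linear_combination -h2
  · rintro rfl
    simp [add_comm]

theorem comm_ss {n : ℕ} (hn : 0 < n) (hodd : Odd n) (i j e f) :
    Commute (s i e : VModel n) (s j f) ↔ j = i := by
  simp only [Commute, SemiconjBy, ss, r.injEq]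
  constructor
  · rintro ⟨h1, h2⟩
    apply sub_eq_zero.mp
    apply key hn hodd
    · linear_combination -h1
    · rw [map_sub]; linear_combination h2
  · rintro rfl
    simp [add_comm]

theorem card_conj {n : ℕ} (hn : 0 < n) (hodd : Odd n) :
    Nat.card (ConjClasses (VModel n)) = 2 * n + 3 := by
  classical
  have : NeZero (2 * n) := ⟨by omega⟩
  let _ : Fintype (VModel n) := Fintype.ofEquiv _ (equivSum n)
  have hcard : Nat.card (VModel n) = 8 * n := by
    rw [← Nat.card_congr (equivSum n), Nat.card_eq_fintype_card]
    simp [ZMod.card]; ring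
  have h := card_comm_eq_card_conjClasses_mul_card (VModel n)
  have h2 : Nat.card { p : VModel n × VModel n // Commute p.1 p.2 } = (2 * n + 3) * (8 * n) := by
    rw [Nat.card_eq_fintype_card, Fintype.card_subtype, Finset.card_filter,
      Fintype.sum_prod_type, ← (equivSum n).sum_comp]
    simp_rw [← (equivSum n).sum_comp]
    simp only [Fintype.sum_sum_type, equivSum, Equiv.coe_fn_mk, Sum.elim_inl, Sum.elim_inr,
      comm_rr, comm_rs hn hodd, comm_ss hn hodd, Commute.symm_iff (a := s _ _) (b := r _ _),
      Fintype.sum_prod_type]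
    simp only [Finset.sum_add_distrib]
    simp [ZMod.card]
    ring
  rw [h2, hcard] at h
  exact (Nat.eq_of_mul_eq_mul_right (by omega) h).symm

/-- Rotation hom. -/
def R (n : ℕ) : Multiplicative (ZMod (2 * n) × ZMod 2) →* VModel n where
  toFun p := r p.toAdd.1 p.toAdd.2
  map_one' := rfl
  map_mul' _ _ := rfl

theorem r_zpow {n : ℕ} (i : ZMod (2 * n)) (e : ZMod 2) (k : ℤ) :
    (r i e : VModel n) ^ k = r ((k : ZMod (2 * n)) * i) ((k : ZMod 2) * e) := by
  have := map_zpow (R n) (Multiplicative.ofAdd (i, e)) k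
  simp only [← ofAdd_zsmul] at this
  refine this.symm.trans ?_
  change r (k • i) (k • e) = _
  simp only [zsmul_eq_mul]

/-- Images of generators. -/
def gen (n : ℕ) : Fin 2 → VModel n := ![r 1 0, s 0 0]

theorem gen_rels (n : ℕ) : ∀ w ∈ V8nRels n, FreeGroup.lift (gen n) w = 1 := by
  rintro w (rfl | rfl | rfl | rfl)
  · have := r_zpow (n := n) 1 0 ((2 * n : ℕ) : ℤ)
    rw [zpow_natCast] at this
    simp only [map_pow, FreeGroup.lift_apply_of, gen, Matrix.cons_val_zero, this, one_eq]
    rw [Int.cast_natCast, ZMod.natCast_self]; simp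
  · simp [gen, pow_succ, ss, sr, rs, rr, one_eq]; decide
  · simp [gen, pow_succ, ss, sr, rs, rr, one_eq]; try decide
  · simp [gen, pow_succ, ss, sr, rs, rr, one_eq, inv_s]; try decide

/-- The comparison map. -/
def F (n : ℕ) : V8n n →* VModel n := PresentedGroup.toGroup (gen_rels n)

theorem F_a (n : ℕ) : F n (aV n) = r 1 0 := by simp [F, aV, gen]
theorem F_b (n : ℕ) : F n (bV n) = s 0 0 := by simp [F, bV, gen]

theorem a_pow (n : ℕ) : aV n ^ (2 * n) = 1 :=
  PresentedGroup.one_of_mem (rels := V8nRels n) (x := FreeGroup.of 0 ^ (2 * n)) (by simp [V8nRels])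
theorem b_pow (n : ℕ) : bV n ^ 4 = 1 :=
  PresentedGroup.one_of_mem (rels := V8nRels n) (x := FreeGroup.of 1 ^ 4) (by simp [V8nRels])
theorem ba_pow (n : ℕ) : (bV n * aV n) ^ 2 = 1 :=
  PresentedGroup.one_of_mem (rels := V8nRels n)
    (x := (FreeGroup.of 1 * FreeGroup.of 0) ^ 2) (by simp [V8nRels])
theorem bia_pow (n : ℕ) : ((bV n)⁻¹ * aV n) ^ 2 = 1 :=
  PresentedGroup.one_of_mem (rels := V8nRels n)
    (x := ((FreeGroup.of 1)⁻¹ * FreeGroup.of 0) ^ 2) (by simp [V8nRels])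

theorem conj_zpow_aux {G : Type*} [Group G] (a b : G) (h1 : (b * a) ^ 2 = 1)
    (h2 : (b⁻¹ * a) ^ 2 = 1) (h4 : b ^ 4 = 1) (i : ℤ) : b * a ^ i = a ^ (-i) * b ^ (1 - 2 * i) := by
  have e1 : a * b * a = b⁻¹ := by
    rw [pow_two] at h1
    apply mul_left_cancel (a := b)
    rw [mul_inv_cancel, ← h1]; group
  have e2 : a * b⁻¹ * a = b := by
    rw [pow_two] at h2
    apply mul_left_cancel (a := b⁻¹)
    rw [inv_mul_cancel, ← h2]; group
  have hc : Commute a (b ^ 2) := by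
    have : b * b = a * b⁻¹ * b⁻¹ * a⁻¹ := by
      calc b * b = (a * b⁻¹ * a) * (b⁻¹)⁻¹ := by rw [e2]; group
        _ = (a * b⁻¹ * a) * (a * b * a)⁻¹ := by rw [e1]
        _ = _ := by group
    have hb : b⁻¹ * b⁻¹ = b * b := by
      apply mul_left_cancel (a := b * b)
      rw [show b * b * (b * b) = b ^ 4 by simp only [pow_succ, pow_zero, one_mul, mul_assoc], h4]; group
    rw [mul_assoc a, hb, eq_mul_inv_iff_mul_eq] at this
    rw [pow_two]
    exact this.symm
  have hc' : Commute a⁻¹ (b ^ (-2 : ℤ)) := by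
    rw [zpow_neg, zpow_ofNat]; exact hc.inv_inv
  have h5 : b * a * b⁻¹ = a⁻¹ * b ^ (-2 : ℤ) := by
    apply mul_left_cancel (a := a)
    rw [← mul_assoc, ← mul_assoc, e1]; group
  have h6 : (b * a * b⁻¹) ^ i = b * a ^ i * b⁻¹ := conj_zpow
  rw [h5, hc'.mul_zpow] at h6
  rw [eq_mul_inv_iff_mul_eq] at h6
  rw [← h6]
  rw [← zpow_mul, inv_zpow', mul_assoc, ← zpow_add_one]
  congr 2; ring

theorem normal_form (n : ℕ) (x : V8n n) : ∃ i j : ℤ, x = aV n ^ i * bV n ^ j := by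
  have hx : x ∈ Subgroup.closure (Set.range (PresentedGroup.of (rels := V8nRels n))) := by
    rw [PresentedGroup.closure_range_of]; trivial
  have hb := conj_zpow_aux _ _ (ba_pow n) (bia_pow n) (b_pow n)
  have hb' : ∀ i : ℤ, (bV n)⁻¹ * aV n ^ i = aV n ^ (-i) * bV n ^ (2 * i - 1) := by
    intro i
    have := conj_zpow_aux (aV n) (bV n)⁻¹ (bia_pow n) (by rw [inv_inv]; exact ba_pow n)
      (by rw [inv_pow, b_pow, inv_one]) i
    rw [this, inv_zpow']; congr 2; ring
  induction hx using Subgroup.closure_induction_left with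
  | one => exact ⟨0, 0, by simp⟩
  | mul_left x hx y hy ih =>
    obtain ⟨i, j, rfl⟩ := ih
    obtain ⟨t, rfl⟩ := hx
    fin_cases t
    · exact ⟨1 + i, j, by
        change aV n * _ = _
        rw [zpow_add, zpow_one, mul_assoc]⟩
    · exact ⟨-i, 1 - 2 * i + j, by
        change bV n * _ = _
        rw [← mul_assoc, hb, zpow_add, mul_assoc]⟩
  | inv_mul_cancel x hx y hy ih =>
    obtain ⟨i, j, rfl⟩ := ih
    obtain ⟨t, rfl⟩ := hx
    fin_cases t
    · exact ⟨-1 + i, j, by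
        change (aV n)⁻¹ * _ = _
        rw [zpow_add, zpow_neg_one, mul_assoc]⟩
    · exact ⟨-i, 2 * i - 1 + j, by
        change (bV n)⁻¹ * _ = _
        rw [← mul_assoc, hb', zpow_add, mul_assoc]⟩

theorem F_even (n : ℕ) (i k : ℤ) : F n (aV n ^ i * bV n ^ (2 * k)) = r i k := by
  have : (s 0 0 : VModel n) ^ (2 : ℤ) = r 0 1 := by
    rw [zpow_ofNat, pow_two, ss]; simp
  rw [map_mul, map_zpow, map_zpow, F_a, F_b, zpow_mul, this, r_zpow, r_zpow, rr]
  simp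

theorem F_odd (n : ℕ) (i k : ℤ) : F n (aV n ^ i * bV n ^ (2 * k + 1)) = s i k := by
  rw [zpow_add_one, ← mul_assoc, map_mul, F_even, F_b, rs]; simp

theorem F_bij (n : ℕ) : Function.Bijective (F n) := by
  constructor
  · rw [injective_iff_map_eq_one]
    intro x hx
    obtain ⟨i, j, rfl⟩ := normal_form n x
    obtain ⟨k, rfl | rfl⟩ := Int.even_or_odd' j
    · rw [F_even, one_eq, r.injEq] at hx
      obtain ⟨h1, h2⟩ := hx
      rw [ZMod.intCast_zmod_eq_zero_iff_dvd] at h2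
      rw [ZMod.intCast_zmod_eq_zero_iff_dvd] at h1
      obtain ⟨u, rfl⟩ := h1
      obtain ⟨v, rfl⟩ := h2
      rw [zpow_mul, zpow_natCast, a_pow, one_zpow, one_mul, ← mul_assoc, zpow_mul]
      have := b_pow n
      rw [show ((2 : ℤ) * ((2 : ℕ) : ℤ)) = ((4 : ℕ) : ℤ) by norm_num, zpow_natCast, this, one_zpow]
    · rw [F_odd, one_eq] at hx
      cases hx
  · rintro (⟨i, e⟩ | ⟨i, e⟩) <;> obtain ⟨i, rfl⟩ := ZMod.intCast_surjective i <;>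
      obtain ⟨e, rfl⟩ := ZMod.intCast_surjective e
    · exact ⟨_, F_even n i e⟩
    · exact ⟨_, F_odd n i e⟩

end VModel

/-- If `n` is an odd positive integer, then `V_{8n}` has exactly
`2n + 3` conjugacy classes. -/
theorem card_conjClasses_V8n_odd (n : ℕ) (hn : 0 < n) (hodd : Odd n) :
    Nat.card (ConjClasses (V8n n)) = 2 * n + 3 := by
  rw [← VModel.card_conj hn hodd]
  let E : V8n n ≃* VModel n := MulEquiv.ofBijective _ (VModel.F_bij n)
  refine Nat.card_congr ⟨ConjClasses.map E.toMonoidHom, ConjClasses.map E.symm.toMonoidHom, ?_, ?_⟩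
  · intro x
    obtain ⟨x, rfl⟩ := ConjClasses.exists_rep x
    exact congrArg ConjClasses.mk (E.symm_apply_apply x)
  · intro x
    obtain ⟨x, rfl⟩ := ConjClasses.exists_rep x
    exact congrArg ConjClasses.mk (E.apply_symm_apply x)
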